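/- For odd N = 2n+1 the FRT–Clifford algebra Cl_{2n+1}(q,c) is semisimple and decomposes as the direct sum of two simple two-sided ideals I_+ ⊕ I_-, where I_± is generated by ρ_± = γ_1⋯γ_n(±c + γ_{n+1})γ_{n+2}⋯γ_N; moreover dim I_+ = dim I_- = 2^{2n}. -/

import Mathlib

noncomputable section

namespace FRT

/-- The "dual" index `i' = N+1-i` (0-indexed: `N-1-i`). -/
def dual {N : ℕ} (i : Fin N) : Fin N := ⟨N - 1 - i.val, by have := i.2; omega⟩

/-- Generators of the free algebra. -/
def gen {N : ℕ} (i : Fin N) : FreeAlgebra ℂ (Fin N) := FreeAlgebra.ι ℂ i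

/-- The sum `∑_{k<i} q^{2k-2i+2} γ_k γ_{k'}` appearing in the defining relations. -/
def pairSum (N : ℕ) (q : ℂ) (i : Fin N) : FreeAlgebra ℂ (Fin N) :=
  ∑ k ∈ Finset.Iio i, (q ^ (2 * (k.val : ℤ) - 2 * (i.val : ℤ) + 2)) • (gen k * gen (dual k))

/-- The defining relations of the FRT–Clifford algebra `Cl_N(q,c)`. -/
inductive Rel (N : ℕ) (q c : ℂ) : FreeAlgebra ℂ (Fin N) → FreeAlgebra ℂ (Fin N) → Prop
  | sq (i : Fin N) (h : 2 * i.val + 1 ≠ N) : Rel N q c (gen i * gen i) 0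
  | swap (i j : Fin N) (hlt : i < j) (h : i.val + j.val + 1 ≠ N) :
      Rel N q c (gen j * gen i) ((-(q ^ 2)) • (gen i * gen j))
  | pair (i : Fin N) (h : 2 * i.val + 1 < N) :
      Rel N q c (gen (dual i) * gen i)
        (-(gen i * gen (dual i)) + (q ^ 2 - q⁻¹ ^ 2) • pairSum N q i +
          algebraMap ℂ _ (c ^ 2 * q ^ ((N : ℤ) - 2 * (i.val : ℤ) - 1) * (q + q⁻¹)))
  | middle (i : Fin N) (h : 2 * i.val + 1 = N) :
      Rel N q c (gen i * gen i) ((q - q⁻¹) • pairSum N q i + algebraMap ℂ _ (c ^ 2))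

/-- The FRT–Clifford algebra `Cl_N(q,c)`. -/
abbrev Cl (N : ℕ) (q c : ℂ) := RingQuot (Rel N q c)

/-- The generators `γ_i` of `Cl_N(q,c)`. -/
def γ (N : ℕ) (q c : ℂ) (i : Fin N) : Cl N q c :=
  RingQuot.mkAlgHom ℂ (Rel N q c) (gen i)

/-- Ordered product `γ_1 γ_2 ⋯ γ_m` of the first `m` generators. -/
def prodFirst (N : ℕ) (q c : ℂ) (m : ℕ) : Cl N q c :=
  (((List.finRange N).take m).map (γ N q c)).prod

/-- Ordered product `γ_{m+1} γ_{m+2} ⋯ γ_N` (0-indexed: indices `m,…,N-1`). -/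
def prodFrom (N : ℕ) (q c : ℂ) (m : ℕ) : Cl N q c :=
  (((List.finRange N).drop m).map (γ N q c)).prod

/-- The ordered monomial `γ_1^{i_1} ⋯ γ_N^{i_N}` for `i ∈ {0,1}^N`. -/
def monoB (N : ℕ) (q c : ℂ) (f : Fin N → Bool) : Cl N q c :=
  ((List.finRange N).map (fun i => if f i then γ N q c i else 1)).prod

/-- The ordered monomial `γ_1^{i_1} ⋯ γ_n^{i_n}` for `i ∈ {0,1}^n`, `n ≤ N`. -/
def monoLow (N : ℕ) (q c : ℂ) {n : ℕ} (h : n ≤ N) (f : Fin n → Bool) : Cl N q c :=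
  ((List.finRange n).map (fun j => if f j then γ N q c (Fin.castLE h j) else 1)).prod

/-- `z` is homogeneous of `∂_i`-degree `0`: it is fixed by every algebra endomorphism
rescaling `γ_i` by `t` and `γ_{i'}` by `t⁻¹`. -/
def DegZeroAt (N : ℕ) (q c : ℂ) (i : ℕ) (z : Cl N q c) : Prop :=
  ∀ t : ℂ, t ≠ 0 → ∀ f : Cl N q c →ₐ[ℂ] Cl N q c,
    (∀ j : Fin N, f (γ N q c j) =
      (if j.val = i then t else if j.val + i + 1 = N then t⁻¹ else 1) • γ N q c j) →
    f z = z

/-- `ρ_η = γ_1⋯γ_n(ηc + γ_{n+1})γ_{n+2}⋯γ_N` in `Cl_{2n+1}(q,c)`. -/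
def rhoOdd (n : ℕ) (q c η : ℂ) : Cl (2 * n + 1) q c :=
  prodFirst (2 * n + 1) q c n *
    (algebraMap ℂ (Cl (2 * n + 1) q c) (η * c) + γ (2 * n + 1) q c ⟨n, by omega⟩) *
    prodFrom (2 * n + 1) q c (n + 1)

/-!
The outermost generators of `Cl_{N+2}(q,c)` square to zero and their anticommutator is the nonzero
scalar `c² q^(N+1) (q + q⁻¹)`, so after rescaling they are the creation and annihilation operators
of a fermion and generate a copy of the `2 × 2` matrices. Multiplied by a diagonal matrix of this
copy, the inner generators commute with it, and then they satisfy the relations of `Cl_N(q,c)`: the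
contribution of the outermost pair to the sums in the relations is exactly what this twist absorbs.
So `Cl_{N+2}(q,c) ≃ M₂(Cl_N(q,c))`. Under this isomorphism `ρ_η` becomes a multiple of `ρ_η e₁₁`,
so the ideals `I_±` consist of the matrices over the ideals `I_±` of the smaller algebra, and by
induction everything reduces to `Cl_1(q,c) = ℂ[γ]/(γ² - c²) ≃ ℂ × ℂ`, where `I_±` are the two
factors.
-/

section Presentation

variable {N : ℕ} {q c : ℂ} {A : Type*} [Ring A] [Algebra ℂ A]

/-- The element `c² q^(N-2i-1) + (q - q⁻¹) ∑_{k<i} q^(2k-2i+2) Γ_k Γ_{k'}`: it is `Γ_i²` in the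
middle, and `(q + q⁻¹)` times it is the anticommutator of `Γ_i` and `Γ_{i'}`, because
`q² - q⁻² = (q + q⁻¹)(q - q⁻¹)`. -/
def pairing (q c : ℂ) (Γ : Fin N → A) (i : Fin N) : A :=
  algebraMap ℂ A (c ^ 2 * q ^ ((N : ℤ) - 2 * (i.val : ℤ) - 1)) +
    (q - q⁻¹) • ∑ k ∈ Finset.Iio i,
      q ^ (2 * (k.val : ℤ) - 2 * (i.val : ℤ) + 2) • (Γ k * Γ (dual k))

/-- A family in an algebra that satisfies the defining relations of `Cl_N(q,c)`. -/
structure IsCliffordFamily (q c : ℂ) (Γ : Fin N → A) : Prop where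
  sq (i : Fin N) (h : 2 * i.val + 1 ≠ N) : Γ i * Γ i = 0
  swap (i j : Fin N) (hlt : i < j) (h : i.val + j.val + 1 ≠ N) :
    Γ j * Γ i = -(q ^ 2) • (Γ i * Γ j)
  pair (i : Fin N) (h : 2 * i.val + 1 < N) :
    Γ (dual i) * Γ i + Γ i * Γ (dual i) = (q + q⁻¹) • pairing q c Γ i
  middle (i : Fin N) (h : 2 * i.val + 1 = N) : Γ i * Γ i = pairing q c Γ i

lemma lift_pairSum (Γ : Fin N → A) (i : Fin N) :
    FreeAlgebra.lift ℂ Γ (pairSum N q i) =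
      ∑ k ∈ Finset.Iio i,
        q ^ (2 * (k.val : ℤ) - 2 * (i.val : ℤ) + 2) • (Γ k * Γ (dual k)) := by
  simp [pairSum, gen]

lemma lift_pair_iff (Γ : Fin N → A) (i : Fin N) :
    FreeAlgebra.lift ℂ Γ (gen (dual i) * gen i) =
        FreeAlgebra.lift ℂ Γ (-(gen i * gen (dual i)) + (q ^ 2 - q⁻¹ ^ 2) • pairSum N q i +
          algebraMap ℂ _ (c ^ 2 * q ^ ((N : ℤ) - 2 * (i.val : ℤ) - 1) * (q + q⁻¹))) ↔
      Γ (dual i) * Γ i + Γ i * Γ (dual i) = (q + q⁻¹) • pairing q c Γ i := by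
  have hrhs : (q + q⁻¹) • pairing q c Γ i =
      (q ^ 2 - q⁻¹ ^ 2) • FreeAlgebra.lift ℂ Γ (pairSum N q i) +
        algebraMap ℂ A (c ^ 2 * q ^ ((N : ℤ) - 2 * (i.val : ℤ) - 1) * (q + q⁻¹)) := by
    rw [pairing, lift_pairSum, Algebra.algebraMap_eq_smul_one, Algebra.algebraMap_eq_smul_one]
    module
  simp only [hrhs, gen, map_add, map_neg, map_mul, map_smul, AlgHom.commutes,
    FreeAlgebra.lift_ι_apply, add_assoc, eq_neg_add_iff_add_eq]
  rw [add_comm (Γ i * _)]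

lemma lift_middle_iff (Γ : Fin N → A) (i : Fin N) (h : 2 * i.val + 1 = N) :
    FreeAlgebra.lift ℂ Γ (gen i * gen i) =
        FreeAlgebra.lift ℂ Γ ((q - q⁻¹) • pairSum N q i + algebraMap ℂ _ (c ^ 2)) ↔
      Γ i * Γ i = pairing q c Γ i := by
  have hexp : (N : ℤ) - 2 * (i.val : ℤ) - 1 = 0 := by omega
  simp [lift_pairSum, gen, pairing, hexp, add_comm]

lemma isCliffordFamily_iff (Γ : Fin N → A) :
    IsCliffordFamily q c Γ ↔
      ∀ ⦃x y⦄, Rel N q c x y → FreeAlgebra.lift ℂ Γ x = FreeAlgebra.lift ℂ Γ y := by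
  constructor
  · rintro hΓ x y (⟨i, h⟩ | ⟨i, j, hlt, h⟩ | ⟨i, h⟩ | ⟨i, h⟩)
    · simpa [gen] using hΓ.sq i h
    · simpa [gen] using hΓ.swap i j hlt h
    · exact (lift_pair_iff Γ i).2 (hΓ.pair i h)
    · exact (lift_middle_iff Γ i h).2 (hΓ.middle i h)
  · intro hΓ
    refine ⟨fun i h => ?_, fun i j hlt h => ?_, fun i h => ?_, fun i h => ?_⟩
    · simpa [gen] using hΓ (Rel.sq i h)
    · simpa [gen] using hΓ (Rel.swap i j hlt h)
    · exact (lift_pair_iff Γ i).1 (hΓ (Rel.pair i h))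
    · exact (lift_middle_iff Γ i h).1 (hΓ (Rel.middle i h))

lemma isCliffordFamily_γ (N : ℕ) (q c : ℂ) : IsCliffordFamily q c (γ N q c) := by
  have hlift : FreeAlgebra.lift ℂ (γ N q c) = RingQuot.mkAlgHom ℂ (Rel N q c) :=
    FreeAlgebra.hom_ext <| funext fun i => FreeAlgebra.lift_ι_apply _ i
  exact (isCliffordFamily_iff _).2 fun x y h => by
    rw [hlift, RingQuot.mkAlgHom_rel ℂ h]

/-- The algebra map out of `Cl_N(q,c)` given by a family satisfying its relations. -/
def Cl.lift {Γ : Fin N → A} (hΓ : IsCliffordFamily q c Γ) : Cl N q c →ₐ[ℂ] A :=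
  RingQuot.liftAlgHom ℂ ⟨FreeAlgebra.lift ℂ Γ, (isCliffordFamily_iff Γ).1 hΓ⟩

@[simp]
lemma Cl.lift_γ {Γ : Fin N → A} (hΓ : IsCliffordFamily q c Γ) (i : Fin N) :
    Cl.lift hΓ (γ N q c i) = Γ i := by
  simp [Cl.lift, γ, gen]

lemma Cl.algHom_ext {f g : Cl N q c →ₐ[ℂ] A} (h : ∀ i, f (γ N q c i) = g (γ N q c i)) :
    f = g :=
  RingQuot.ringQuot_ext' ℂ f g <| FreeAlgebra.hom_ext <| funext h

lemma IsCliffordFamily.map {B : Type*} [Ring B] [Algebra ℂ B] {Γ : Fin N → A}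
    (hΓ : IsCliffordFamily q c Γ) (f : A →ₐ[ℂ] B) : IsCliffordFamily q c (f ∘ Γ) := by
  have hlift : FreeAlgebra.lift ℂ (f ∘ Γ) = f.comp (FreeAlgebra.lift ℂ Γ) :=
    FreeAlgebra.hom_ext <| funext fun i => by simp
  exact (isCliffordFamily_iff _).2 fun x y h => by
    rw [hlift, AlgHom.comp_apply, (isCliffordFamily_iff Γ).1 hΓ h, AlgHom.comp_apply]

lemma Cl.adjoin_range_γ (N : ℕ) (q c : ℂ) :
    Algebra.adjoin ℂ (Set.range (γ N q c)) = ⊤ := by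
  have hrange : Set.range (γ N q c) =
      RingQuot.mkAlgHom ℂ (Rel N q c) '' Set.range (FreeAlgebra.ι ℂ) := Set.range_comp _ _
  rw [hrange, ← AlgHom.map_adjoin, FreeAlgebra.adjoin_range_ι, Algebra.map_top,
    AlgHom.range_eq_top]
  exact RingQuot.mkAlgHom_surjective ℂ _

lemma Cl.commute_map {f : Cl N q c →ₐ[ℂ] A} {a : A} (h : ∀ i, Commute a (f (γ N q c i)))
    (x : Cl N q c) : Commute a (f x) := by
  have hx : x ∈ Algebra.adjoin ℂ (Set.range (γ N q c)) := Cl.adjoin_range_γ N q c ▸ trivial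
  induction hx using Algebra.adjoin_induction with
  | mem x hx => obtain ⟨i, rfl⟩ := hx; exact h i
  | algebraMap r => rw [AlgHom.commutes]; exact (Algebra.commutes r a).symm
  | add x y _ _ hx hy => rw [map_add]; exact hx.add_right hy
  | mul x y _ _ hx hy => rw [map_mul]; exact hx.mul_right hy

end Presentation

section FermionPair

variable {K A : Type*} [CommSemiring K] [Semiring A] [Algebra K A] {α β : A}

/-- A creation and an annihilation operator of one fermionic mode. Equivalently `βα`, `β`, `α`, `αβ`
are the `2 × 2` matrix units `e₀₀`, `e₀₁`, `e₁₀`, `e₁₁`. -/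
structure IsFermionPair (α β : A) : Prop where
  left_sq : α * α = 0
  right_sq : β * β = 0
  anticomm : β * α + α * β = 1

/-- The diagonal matrix `diag(1, x)` in the matrix units of the pair `α, β`. -/
def twist (α β : A) (x : K) : A := β * α + x • (α * β)

namespace IsFermionPair

lemma left_mul_right_mul_left (h : IsFermionPair α β) : α * β * α = α := by
  simpa [mul_add, ← mul_assoc, h.left_sq] using congr(α * $(h.anticomm))

lemma right_mul_left_mul_right (h : IsFermionPair α β) : β * α * β = β := by
  simpa [mul_add, ← mul_assoc, h.right_sq] using congr(β * $(h.anticomm))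

lemma twist_one (h : IsFermionPair α β) : twist α β (1 : K) = 1 := by
  rw [twist, one_smul, h.anticomm]

lemma twist_eq {K A : Type*} [CommRing K] [Ring A] [Algebra K A] {α β : A}
    (h : IsFermionPair α β) (x : K) :
    twist α β x = 1 + (x - 1) • (α * β) := by
  rw [twist, ← h.anticomm]
  module

lemma left_mul_twist (h : IsFermionPair α β) (x : K) : α * twist α β x = α := by
  rw [twist, mul_add, mul_smul_comm, ← mul_assoc, ← mul_assoc, h.left_sq,
    h.left_mul_right_mul_left, zero_mul, smul_zero, add_zero]

lemma twist_mul_left (h : IsFermionPair α β) (x : K) : twist α β x * α = x • α := by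
  rw [twist, add_mul, smul_mul_assoc, mul_assoc, h.left_sq, h.left_mul_right_mul_left, mul_zero,
    zero_add]

lemma twist_mul_right (h : IsFermionPair α β) (x : K) : twist α β x * β = β := by
  rw [twist, add_mul, smul_mul_assoc, mul_assoc α, h.right_sq, h.right_mul_left_mul_right,
    mul_zero, smul_zero, add_zero]

lemma right_mul_twist (h : IsFermionPair α β) (x : K) : β * twist α β x = x • β := by
  rw [twist, mul_add, mul_smul_comm, ← mul_assoc, ← mul_assoc, h.right_sq,
    h.right_mul_left_mul_right, zero_mul, zero_add]

lemma twist_mul_twist (h : IsFermionPair α β) (x y : K) :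
    twist α β x * twist α β y = twist α β (x * y) := by
  conv_lhs => rw [twist, add_mul, smul_mul_assoc, mul_assoc, mul_assoc, h.left_mul_twist,
    h.right_mul_twist, mul_smul_comm, smul_smul]
  rfl

lemma twist_mul_twist_of_mul_eq_one (h : IsFermionPair α β) {x y : K} (hxy : x * y = 1) :
    twist α β x * twist α β y = 1 := by
  rw [h.twist_mul_twist, hxy, h.twist_one]

lemma isUnit_twist (h : IsFermionPair α β) {x : K} (hx : IsUnit x) : IsUnit (twist α β x) := by
  obtain ⟨u, rfl⟩ := hx
  exact ⟨⟨_, _, h.twist_mul_twist_of_mul_eq_one u.mul_inv,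
    h.twist_mul_twist_of_mul_eq_one u.inv_mul⟩, rfl⟩

end IsFermionPair

lemma isFermionPair_single (R : Type*) [Semiring R] :
    IsFermionPair (Matrix.single (1 : Fin 2) (0 : Fin 2) (1 : R)) (Matrix.single 0 1 1) where
  left_sq := by simp
  right_sq := by simp
  anticomm := by
    ext i j
    fin_cases i <;> fin_cases j <;> simp [Matrix.single_mul_single_same]

lemma commute_twist {z : A} (hα : Commute α z) (hβ : Commute β z) (x : K) :
    Commute (twist α β x) z :=
  (hβ.mul_left hα).add_left ((hα.mul_left hβ).smul_left x)

end FermionPair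

section Extension

variable {N : ℕ} {q c : ℂ} {A : Type*} [Ring A] [Algebra ℂ A]

lemma dual_zero : dual (0 : Fin (N + 2)) = Fin.last (N + 1) := by
  ext; simp [dual]

lemma dual_castSucc_succ (i : Fin N) : dual i.castSucc.succ = (dual i).castSucc.succ := by
  ext; grind [dual]

@[elab_as_elim]
lemma outer_inner_cases {P : Fin (N + 2) → Prop} (first : P 0) (last : P (Fin.last (N + 1)))
    (inner : ∀ i : Fin N, P i.castSucc.succ) (i : Fin (N + 2)) : P i :=
  Fin.cases first (Fin.lastCases last inner) i

lemma sum_Iio_castSucc_succ {M : Type*} [AddCommMonoid M] (f : Fin (N + 2) → M) (i : Fin N) :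
    ∑ k ∈ Finset.Iio i.castSucc.succ, f k = f 0 + ∑ k ∈ Finset.Iio i, f k.castSucc.succ := by
  simp only [← Finset.filter_gt_eq_Iio, Finset.sum_filter]
  rw [Fin.sum_univ_succ, Fin.sum_univ_castSucc]
  simp [(Fin.le_last _).not_gt]

/-- The scalar `(q + q⁻¹) c² q^(N+1)`, the anticommutator of the two outermost generators of
`Cl_{N+2}(q,c)`. -/
def outerScalar (N : ℕ) (q c : ℂ) : ℂ := (q + q⁻¹) * (c ^ 2 * q ^ (N + 1))

/-- The family `α, DΓ_1, …, DΓ_N, aβ` with `D = diag(1, -q²)` in the matrix units of `α, β`, where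
`a` is the anticommutator of the two outermost generators. -/
def extendFamily (q c : ℂ) (α β : A) (Γ : Fin N → A) : Fin (N + 2) → A :=
  Fin.cons α (Fin.snoc (fun i => twist α β (-(q ^ 2)) * Γ i) (outerScalar N q c • β))

variable {α β : A} {Γ : Fin N → A}

@[simp]
lemma extendFamily_zero : extendFamily q c α β Γ 0 = α := rfl

@[simp]
lemma extendFamily_last :
    extendFamily q c α β Γ (Fin.last (N + 1)) = outerScalar N q c • β := by
  rw [extendFamily, ← Fin.succ_last, Fin.cons_succ, Fin.snoc_last]

@[simp]
lemma extendFamily_inner (i : Fin N) :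
    extendFamily q c α β Γ i.castSucc.succ = twist α β (-(q ^ 2)) * Γ i := by
  simp only [extendFamily, Fin.cons_succ, Fin.snoc_castSucc]

lemma extendFamily_inner_mul (h : IsFermionPair α β) (hα : ∀ i, Commute α (Γ i))
    (hβ : ∀ i, Commute β (Γ i)) (i j : Fin N) :
    extendFamily q c α β Γ i.castSucc.succ * extendFamily q c α β Γ j.castSucc.succ =
      twist α β (q ^ 4) * (Γ i * Γ j) := by
  rw [extendFamily_inner, extendFamily_inner, (commute_twist (hα i) (hβ i) _).symm.mul_mul_mul_comm,
    h.twist_mul_twist]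
  ring_nf

lemma pairing_zero (q c : ℂ) (Γ : Fin (N + 2) → A) :
    (q + q⁻¹) • pairing q c Γ 0 = algebraMap ℂ A (outerScalar N q c) := by
  have hexp : ((N + 2 : ℕ) : ℤ) - 2 * ((0 : Fin (N + 2)).val : ℤ) - 1 = (N + 1 : ℕ) := by
    grind [Fin.val_zero]
  rw [pairing, hexp, zpow_natCast, show Finset.Iio (0 : Fin (N + 2)) = ∅ from Finset.Iio_bot]
  simp [outerScalar, Algebra.algebraMap_eq_smul_one, mul_smul]

lemma sub_inv_mul_outerScalar (hq : q ≠ 0) (N i : ℕ) :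
    (q - q⁻¹) * (q ^ (-2 * (i : ℤ)) * outerScalar N q c) =
      (q ^ 4 - 1) * (c ^ 2 * q ^ ((N : ℤ) - 2 * (i : ℤ) - 1)) := by
  rw [outerScalar, show (N : ℤ) - 2 * (i : ℤ) - 1 = -2 * (i : ℤ) + ((N + 1 : ℕ) : ℤ) - 2 by
    push_cast; ring, zpow_sub₀ hq, zpow_add₀ hq, zpow_natCast, zpow_ofNat]
  field_simp
  ring

lemma sum_extendFamily_inner (h : IsFermionPair α β)
    (hα : ∀ i, Commute α (Γ i)) (hβ : ∀ i, Commute β (Γ i)) (i : Fin N) :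
    ∑ k ∈ Finset.Iio i.castSucc.succ,
        q ^ (2 * (k.val : ℤ) - 2 * (i.castSucc.succ.val : ℤ) + 2) •
          (extendFamily q c α β Γ k * extendFamily q c α β Γ (dual k)) =
      (q ^ (-2 * (i.val : ℤ)) * outerScalar N q c) • (α * β) +
        twist α β (q ^ 4) * ∑ k ∈ Finset.Iio i,
          q ^ (2 * (k.val : ℤ) - 2 * (i.val : ℤ) + 2) • (Γ k * Γ (dual k)) := by
  rw [sum_Iio_castSucc_succ, dual_zero, extendFamily_zero, extendFamily_last, mul_smul_comm,
    smul_smul, Finset.mul_sum]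
  congr 1
  · congr 3
    grind [Fin.val_zero]
  · refine Finset.sum_congr rfl fun k _ => ?_
    rw [dual_castSucc_succ, extendFamily_inner_mul h hα hβ, mul_smul_comm]
    congr 2
    grind

lemma pairing_extendFamily_inner (hq : q ≠ 0) (h : IsFermionPair α β)
    (hα : ∀ i, Commute α (Γ i)) (hβ : ∀ i, Commute β (Γ i)) (i : Fin N) :
    pairing q c (extendFamily q c α β Γ) i.castSucc.succ =
      twist α β (q ^ 4) * pairing q c Γ i := by
  have hexp : ((N + 2 : ℕ) : ℤ) - 2 * ((i.castSucc.succ : Fin (N + 2)).val : ℤ) - 1 =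
      (N : ℤ) - 2 * (i.val : ℤ) - 1 := by grind
  rw [pairing, hexp, sum_extendFamily_inner h hα hβ, smul_add, smul_smul,
    sub_inv_mul_outerScalar hq, pairing, mul_add, mul_smul_comm, ← add_assoc]
  congr 1
  rw [h.twist_eq, Algebra.algebraMap_eq_smul_one, mul_smul_comm, mul_one]
  module

lemma twist_pow_four_mul_right_inj (hq : q ≠ 0) (h : IsFermionPair α β) {x y : A} :
    twist α β (q ^ 4) * x = twist α β (q ^ 4) * y ↔ x = y :=
  (h.isUnit_twist (IsUnit.mk0 _ (pow_ne_zero 4 hq))).mul_right_inj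

lemma IsCliffordFamily.of_extendFamily (hq : q ≠ 0) (h : IsFermionPair α β)
    (hα : ∀ i, Commute α (Γ i)) (hβ : ∀ i, Commute β (Γ i))
    (hE : IsCliffordFamily q c (extendFamily q c α β Γ)) : IsCliffordFamily q c Γ := by
  have hmul := extendFamily_inner_mul (q := q) (c := c) h hα hβ
  have hpairing := pairing_extendFamily_inner (c := c) hq h hα hβ
  constructor
  case sq =>
    intro i hi
    have hsq := hE.sq i.castSucc.succ (by grind)
    rwa [hmul, ← mul_zero (twist α β (q ^ 4)), twist_pow_four_mul_right_inj hq h] at hsq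
  case swap =>
    intro i j hij hi
    have hswap := hE.swap i.castSucc.succ j.castSucc.succ (by simpa using hij) (by grind)
    rwa [hmul, hmul, ← mul_smul_comm, twist_pow_four_mul_right_inj hq h] at hswap
  case pair =>
    intro i hi
    have hpair := hE.pair i.castSucc.succ (by grind)
    rwa [hpairing, dual_castSucc_succ, hmul, hmul, ← mul_add, ← mul_smul_comm,
      twist_pow_four_mul_right_inj hq h] at hpair
  case middle =>
    intro i hi
    have hmiddle := hE.middle i.castSucc.succ (by grind)
    rwa [hpairing, hmul, twist_pow_four_mul_right_inj hq h] at hmiddle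

lemma extendFamily_inner_mul_zero (h : IsFermionPair α β) {i : Fin N} (hα : Commute α (Γ i)) :
    extendFamily q c α β Γ i.castSucc.succ * extendFamily q c α β Γ 0 =
      -(q ^ 2) • (extendFamily q c α β Γ 0 * extendFamily q c α β Γ i.castSucc.succ) := by
  rw [extendFamily_inner, extendFamily_zero, mul_assoc, ← hα.eq, ← mul_assoc,
    h.twist_mul_left, ← mul_assoc, h.left_mul_twist, smul_mul_assoc]

lemma extendFamily_last_mul_inner (h : IsFermionPair α β) {i : Fin N} (hβ : Commute β (Γ i)) :
    extendFamily q c α β Γ (Fin.last (N + 1)) * extendFamily q c α β Γ i.castSucc.succ =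
      -(q ^ 2) • (extendFamily q c α β Γ i.castSucc.succ *
        extendFamily q c α β Γ (Fin.last (N + 1))) := by
  rw [extendFamily_inner, extendFamily_last, smul_mul_assoc, ← mul_assoc, h.right_mul_twist,
    mul_smul_comm, mul_assoc, ← hβ.eq, ← mul_assoc, h.twist_mul_right, smul_mul_assoc,
    smul_comm]

lemma IsCliffordFamily.extend (hq : q ≠ 0) (h : IsFermionPair α β)
    (hα : ∀ i, Commute α (Γ i)) (hβ : ∀ i, Commute β (Γ i))
    (hΓ : IsCliffordFamily q c Γ) : IsCliffordFamily q c (extendFamily q c α β Γ) := by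
  have hmul := extendFamily_inner_mul (q := q) (c := c) h hα hβ
  have hpairing := pairing_extendFamily_inner (c := c) hq h hα hβ
  constructor
  case sq =>
    intro i hi
    induction i using outer_inner_cases with
    | first => simp [h.left_sq]
    | last => simp [h.right_sq]
    | inner i => rw [hmul, hΓ.sq i (by grind), mul_zero]
  case swap =>
    intro i j hij hi
    induction i using outer_inner_cases with
    | first =>
      induction j using outer_inner_cases with
      | first => simp at hij
      | last => simp at hi
      | inner j => exact extendFamily_inner_mul_zero h (hα j)
    | last => grind
    | inner i =>
      induction j using outer_inner_cases with
      | first => simp at hij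
      | last => exact extendFamily_last_mul_inner h (hβ i)
      | inner j =>
        rw [hmul, hmul, hΓ.swap i j (by simpa using hij) (by grind), mul_smul_comm]
  case pair =>
    intro i hi
    induction i using outer_inner_cases with
    | first =>
      rw [pairing_zero, dual_zero, extendFamily_zero, extendFamily_last,
        smul_mul_assoc, mul_smul_comm, ← smul_add, h.anticomm, Algebra.algebraMap_eq_smul_one]
    | last => grind
    | inner i =>
      rw [hpairing, dual_castSucc_succ, hmul, hmul, ← mul_add, hΓ.pair i (by grind),
        mul_smul_comm]
  case middle =>
    intro i hi
    induction i using outer_inner_cases with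
    | first => simp at hi
    | last => simp at hi
    | inner i => rw [hpairing, hmul, hΓ.middle i (by grind)]

/-- The annihilation operator `a⁻¹ Γ_{N+2}` paired with `Γ_1` in a family for `Cl_{N+2}(q,c)`. -/
def outerRight (q c : ℂ) (Γ : Fin (N + 2) → A) : A :=
  (outerScalar N q c)⁻¹ • Γ (Fin.last (N + 1))

/-- The family obtained from `Γ` by dropping `Γ_1` and `Γ_{N+2}` and untwisting the remaining
elements so that they commute with these two. -/
def innerFamily (q c : ℂ) (Γ : Fin (N + 2) → A) (i : Fin N) : A :=
  twist (Γ 0) (outerRight q c Γ) (-(q ^ 2))⁻¹ * Γ i.castSucc.succ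

lemma outerScalar_ne_zero (hq : q ≠ 0) (hq2 : q ^ 2 ≠ -1) (hc : c ≠ 0) (N : ℕ) :
    outerScalar N q c ≠ 0 := by
  have hsum : q + q⁻¹ ≠ 0 := by
    intro h
    apply hq2
    field_simp at h
    linear_combination h
  exact mul_ne_zero hsum (mul_ne_zero (pow_ne_zero 2 hc) (pow_ne_zero _ hq))

namespace IsCliffordFamily

variable {Γ : Fin (N + 2) → A}

lemma isFermionPair (ha : outerScalar N q c ≠ 0) (hΓ : IsCliffordFamily q c Γ) :
    IsFermionPair (Γ 0) (outerRight q c Γ) where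
  left_sq := hΓ.sq 0 (by simp)
  right_sq := by
    rw [outerRight, smul_mul_assoc, mul_smul_comm, hΓ.sq (Fin.last _) (by simp), smul_zero,
      smul_zero]
  anticomm := by
    have hpair := hΓ.pair 0 (by simp)
    rw [dual_zero, pairing_zero] at hpair
    rw [outerRight, smul_mul_assoc, mul_smul_comm, ← smul_add, hpair,
      Algebra.algebraMap_eq_smul_one, smul_smul, inv_mul_cancel₀ ha, one_smul]

lemma commute_zero_innerFamily (hq : q ≠ 0) (ha : outerScalar N q c ≠ 0)
    (hΓ : IsCliffordFamily q c Γ) (i : Fin N) : Commute (Γ 0) (innerFamily q c Γ i) := by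
  have h := hΓ.isFermionPair ha
  have hswap := hΓ.swap 0 i.castSucc.succ (Fin.succ_pos _) (by grind [Fin.val_zero])
  rw [commute_iff_eq, innerFamily, ← mul_assoc, h.left_mul_twist, mul_assoc, hswap,
    mul_smul_comm, ← mul_assoc, h.twist_mul_left, smul_mul_assoc, smul_smul,
    mul_inv_cancel₀ (neg_ne_zero.2 (pow_ne_zero 2 hq)), one_smul]

lemma commute_outerRight_innerFamily (hq : q ≠ 0) (ha : outerScalar N q c ≠ 0)
    (hΓ : IsCliffordFamily q c Γ) (i : Fin N) :
    Commute (outerRight q c Γ) (innerFamily q c Γ i) := by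
  have h := hΓ.isFermionPair ha
  have hswap : Γ i.castSucc.succ * outerRight q c Γ =
      (-(q ^ 2))⁻¹ • (outerRight q c Γ * Γ i.castSucc.succ) := by
    rw [eq_inv_smul_iff₀ (neg_ne_zero.2 (pow_ne_zero 2 hq)), outerRight, smul_mul_assoc,
      mul_smul_comm, smul_comm,
      hΓ.swap i.castSucc.succ (Fin.last _) (by simp [Fin.lt_def]) (by simp)]
  rw [commute_iff_eq, innerFamily, ← mul_assoc, h.right_mul_twist, smul_mul_assoc, mul_assoc,
    hswap, mul_smul_comm, ← mul_assoc, h.twist_mul_right]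

lemma extendFamily_innerFamily (hq : q ≠ 0) (ha : outerScalar N q c ≠ 0)
    (hΓ : IsCliffordFamily q c Γ) :
    extendFamily q c (Γ 0) (outerRight q c Γ) (innerFamily q c Γ) = Γ := by
  funext i
  induction i using outer_inner_cases with
  | first => rw [extendFamily_zero]
  | last => rw [extendFamily_last, outerRight, smul_inv_smul₀ ha]
  | inner i =>
    rw [extendFamily_inner, innerFamily, ← mul_assoc,
      (hΓ.isFermionPair ha).twist_mul_twist_of_mul_eq_one
        (mul_inv_cancel₀ (neg_ne_zero.2 (pow_ne_zero 2 hq))), one_mul]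

lemma innerFamily (hq : q ≠ 0) (ha : outerScalar N q c ≠ 0) (hΓ : IsCliffordFamily q c Γ) :
    IsCliffordFamily q c (innerFamily q c Γ) :=
  of_extendFamily hq (hΓ.isFermionPair ha) (hΓ.commute_zero_innerFamily hq ha)
    (hΓ.commute_outerRight_innerFamily hq ha) (by rwa [hΓ.extendFamily_innerFamily hq ha])

end IsCliffordFamily

lemma outerRight_extendFamily (ha : outerScalar N q c ≠ 0) (α β : A) (Γ : Fin N → A) :
    outerRight q c (extendFamily q c α β Γ) = β := by
  rw [outerRight, extendFamily_last, inv_smul_smul₀ ha]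

lemma innerFamily_extendFamily (hq : q ≠ 0) (ha : outerScalar N q c ≠ 0)
    (h : IsFermionPair α β) (Γ : Fin N → A) :
    innerFamily q c (extendFamily q c α β Γ) = Γ := by
  funext i
  rw [innerFamily, outerRight_extendFamily ha, extendFamily_zero, extendFamily_inner, ← mul_assoc,
    h.twist_mul_twist_of_mul_eq_one (inv_mul_cancel₀ (neg_ne_zero.2 (pow_ne_zero 2 hq))), one_mul]

section Map

variable {B : Type*} [Ring B] [Algebra ℂ B] (f : A →ₐ[ℂ] B)

lemma map_twist (α β : A) (x : ℂ) : f (twist α β x) = twist (f α) (f β) x := by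
  simp only [twist, map_add, map_mul, map_smul]

lemma map_extendFamily (α β : A) (Γ : Fin N → A) :
    f ∘ extendFamily q c α β Γ = extendFamily q c (f α) (f β) (f ∘ Γ) := by
  funext i
  induction i using outer_inner_cases <;> simp [map_twist]

lemma map_outerRight (Γ : Fin (N + 2) → A) : f (outerRight q c Γ) = outerRight q c (f ∘ Γ) :=
  map_smul f _ _

lemma map_innerFamily (Γ : Fin (N + 2) → A) :
    f ∘ innerFamily q c Γ = innerFamily q c (f ∘ Γ) := by
  funext i
  simp [innerFamily, map_twist, map_outerRight]

end Map

end Extension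

section MatrixUnits

variable {K n R A : Type*} [CommSemiring K] [Semiring R] [Semiring A]
  [Algebra K R] [Algebra K A] [Fintype n] [DecidableEq n]

/-- A complete system of matrix units, the images of the standard matrices `e_{ij}` under a unital
ring homomorphism from a matrix ring. -/
structure IsMatrixUnits (e : n → n → A) : Prop where
  mul_same (i j k : n) : e i j * e j k = e i k
  mul_of_ne (i k : n) {j l : n} (h : j ≠ l) : e i j * e l k = 0
  sum_diag : ∑ i, e i i = 1

/-- The algebra homomorphism `M ↦ ∑ f(M_{ij}) e_{ij}` given by matrix units that commute with the
range of `f`. -/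
def IsMatrixUnits.liftMatrix {e : n → n → A} (he : IsMatrixUnits e) (f : R →ₐ[K] A)
    (hf : ∀ r i j, Commute (e i j) (f r)) : Matrix n n R →ₐ[K] A :=
  AlgHom.ofLinearMap
    (Matrix.liftLinear K fun i j => LinearMap.mulRight K (e i j) ∘ₗ f.toLinearMap)
    (by simp [Matrix.liftLinear_apply, Matrix.one_apply, apply_ite f, ite_mul, he.sum_diag])
    ((LinearMap.map_mul_iff _).2 <| by
      refine Matrix.ext_linearMap _ fun i j => LinearMap.ext fun r =>
        Matrix.ext_linearMap _ fun k l => LinearMap.ext fun s => ?_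
      obtain rfl | hjk := eq_or_ne j k
      · simp [(hf s i j).mul_mul_mul_comm, he.mul_same]
      · simp [(hf s i j).mul_mul_mul_comm, he.mul_of_ne _ _ hjk, hjk])

lemma IsMatrixUnits.liftMatrix_single {e : n → n → A} (he : IsMatrixUnits e) (f : R →ₐ[K] A)
    (hf : ∀ r i j, Commute (e i j) (f r)) (i j : n) (r : R) :
    he.liftMatrix f hf (Matrix.single i j r) = f r * e i j := by
  simp [liftMatrix]

lemma IsMatrixUnits.liftMatrix_scalarAlgHom {e : n → n → A} (he : IsMatrixUnits e) (f : R →ₐ[K] A)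
    (hf : ∀ r i j, Commute (e i j) (f r)) (r : R) :
    he.liftMatrix f hf (Matrix.scalarAlgHom n K r) = f r := by
  simp [liftMatrix, Matrix.liftLinear_apply, Matrix.diagonal_apply, apply_ite f, ite_mul,
    ← Finset.mul_sum, he.sum_diag]

end MatrixUnits

section Periodicity

/-- The matrix units `e_{ij}` determined by a fermion pair. -/
def fermionUnits {A : Type*} [Semiring A] (α β : A) : Matrix (Fin 2) (Fin 2) A :=
  !![β * α, β; α, α * β]

lemma IsFermionPair.isMatrixUnits {A : Type*} [Semiring A] {α β : A} (h : IsFermionPair α β) :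
    IsMatrixUnits (fermionUnits α β) := by
  have hα (x : A) : α * (α * x) = 0 := by rw [← mul_assoc, h.left_sq, zero_mul]
  have hβ (x : A) : β * (β * x) = 0 := by rw [← mul_assoc, h.right_sq, zero_mul]
  have hαβα : α * (β * α) = α := by rw [← mul_assoc, h.left_mul_right_mul_left]
  have hβαβ : β * (α * β) = β := by rw [← mul_assoc, h.right_mul_left_mul_right]
  refine ⟨fun i j k => ?_, fun i k j l hjl => ?_, by simp [fermionUnits, h.anticomm]⟩
  · fin_cases i <;> fin_cases j <;> fin_cases k <;> simp [fermionUnits, mul_assoc, hαβα, hβαβ]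
  · fin_cases i <;> fin_cases j <;> fin_cases k <;> fin_cases l <;>
      simp [fermionUnits, mul_assoc, h.left_sq, h.right_sq, hα, hβ] at hjl ⊢

lemma commute_fermionUnits {A : Type*} [Semiring A] {α β z : A} (hα : Commute α z)
    (hβ : Commute β z) (i j : Fin 2) : Commute (fermionUnits α β i j) z := by
  fin_cases i <;> fin_cases j
  exacts [hβ.mul_left hα, hβ, hα, hα.mul_left hβ]

lemma map_fermionUnits {A B F : Type*} [Semiring A] [Semiring B] [FunLike F A B]
    [RingHomClass F A B] (f : F) (α β : A) (i j : Fin 2) :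
    f (fermionUnits α β i j) = fermionUnits (f α) (f β) i j := by
  fin_cases i <;> fin_cases j <;> simp [fermionUnits]

lemma fermionUnits_single {R : Type*} [Semiring R] (i j : Fin 2) :
    fermionUnits (Matrix.single (1 : Fin 2) (0 : Fin 2) (1 : R)) (Matrix.single 0 1 1) i j =
      Matrix.single i j 1 := by
  fin_cases i <;> fin_cases j <;> simp [fermionUnits]

lemma commute_single_scalarAlgHom {K R n : Type*} [CommSemiring K] [Semiring R] [Algebra K R]
    [Fintype n] [DecidableEq n] (i j : n) (r : R) :
    Commute (Matrix.single i j 1) (Matrix.scalarAlgHom n K r) :=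
  (Matrix.scalar_commute_iff.2 (by simp)).symm

variable {N : ℕ} {q c : ℂ}

/-- The map `Cl_N(q,c) → Cl_{N+2}(q,c)` onto the elements commuting with the outermost
generators. -/
def innerHom (hq : q ≠ 0) (ha : outerScalar N q c ≠ 0) : Cl N q c →ₐ[ℂ] Cl (N + 2) q c :=
  Cl.lift ((isCliffordFamily_γ (N + 2) q c).innerFamily hq ha)

lemma innerHom_comp_γ (hq : q ≠ 0) (ha : outerScalar N q c ≠ 0) :
    innerHom hq ha ∘ γ N q c = innerFamily q c (γ (N + 2) q c) :=
  funext (Cl.lift_γ _)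

/-- The map `Cl_{N+2}(q,c) → M₂(Cl_N(q,c))` sending the outermost generators to multiples of the
matrix units `e₁₀` and `e₀₁`. -/
def toMatrix (hq : q ≠ 0) : Cl (N + 2) q c →ₐ[ℂ] Matrix (Fin 2) (Fin 2) (Cl N q c) :=
  Cl.lift <| ((isCliffordFamily_γ N q c).map (Matrix.scalarAlgHom (Fin 2) ℂ)).extend hq
    (isFermionPair_single (Cl N q c)) (fun _ => commute_single_scalarAlgHom _ _ _)
    (fun _ => commute_single_scalarAlgHom _ _ _)

lemma toMatrix_comp_γ (hq : q ≠ 0) :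
    toMatrix hq ∘ γ (N + 2) q c = extendFamily q c (Matrix.single 1 0 1) (Matrix.single 0 1 1)
      (Matrix.scalarAlgHom (Fin 2) ℂ ∘ γ N q c) :=
  funext (Cl.lift_γ _)

/-- The inverse of `toMatrix`, given by the matrix units of the outermost generators. -/
def ofMatrix (hq : q ≠ 0) (ha : outerScalar N q c ≠ 0) :
    Matrix (Fin 2) (Fin 2) (Cl N q c) →ₐ[ℂ] Cl (N + 2) q c :=
  ((isCliffordFamily_γ (N + 2) q c).isFermionPair ha).isMatrixUnits.liftMatrix (innerHom hq ha)
    fun r => commute_fermionUnits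
      (Cl.commute_map (fun i => by
        simpa [innerHom] using (isCliffordFamily_γ _ q c).commute_zero_innerFamily hq ha i) r)
      (Cl.commute_map (fun i => by
        simpa [innerHom] using (isCliffordFamily_γ _ q c).commute_outerRight_innerFamily hq ha i) r)

lemma ofMatrix_single (hq : q ≠ 0) (ha : outerScalar N q c ≠ 0) (i j : Fin 2) (r : Cl N q c) :
    ofMatrix hq ha (Matrix.single i j r) =
      innerHom hq ha r * fermionUnits (γ (N + 2) q c 0) (outerRight q c (γ (N + 2) q c)) i j :=
  IsMatrixUnits.liftMatrix_single _ _ _ i j r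

lemma ofMatrix_scalarAlgHom (hq : q ≠ 0) (ha : outerScalar N q c ≠ 0) (r : Cl N q c) :
    ofMatrix hq ha (Matrix.scalarAlgHom (Fin 2) ℂ r) = innerHom hq ha r :=
  IsMatrixUnits.liftMatrix_scalarAlgHom _ _ _ r

lemma toMatrix_innerHom (hq : q ≠ 0) (ha : outerScalar N q c ≠ 0) (r : Cl N q c) :
    toMatrix hq (innerHom hq ha r) = Matrix.scalarAlgHom (Fin 2) ℂ r := by
  have hcomp : (toMatrix hq).comp (innerHom hq ha) = Matrix.scalarAlgHom (Fin 2) ℂ := by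
    refine Cl.algHom_ext (congrFun ?_)
    change toMatrix hq ∘ innerHom hq ha ∘ γ N q c = _
    rw [innerHom_comp_γ, map_innerFamily, toMatrix_comp_γ,
      innerFamily_extendFamily hq ha (isFermionPair_single _)]
    rfl
  exact DFunLike.congr_fun hcomp r

lemma ofMatrix_toMatrix (hq : q ≠ 0) (ha : outerScalar N q c ≠ 0) :
    (ofMatrix hq ha).comp (toMatrix hq) = AlgHom.id ℂ (Cl (N + 2) q c) := by
  have hscalar : ofMatrix hq ha ∘ Matrix.scalarAlgHom (Fin 2) ℂ ∘ γ N q c =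
      innerFamily q c (γ (N + 2) q c) := by
    rw [← innerHom_comp_γ hq ha]
    exact funext fun i => ofMatrix_scalarAlgHom hq ha _
  refine Cl.algHom_ext (congrFun ?_)
  change ofMatrix hq ha ∘ toMatrix hq ∘ γ (N + 2) q c = γ (N + 2) q c
  rw [toMatrix_comp_γ, map_extendFamily, hscalar, ofMatrix_single, ofMatrix_single, map_one,
    one_mul, one_mul]
  exact (isCliffordFamily_γ (N + 2) q c).extendFamily_innerFamily hq ha

lemma toMatrix_ofMatrix (hq : q ≠ 0) (ha : outerScalar N q c ≠ 0) :
    (toMatrix hq).comp (ofMatrix hq ha) =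
      AlgHom.id ℂ (Matrix (Fin 2) (Fin 2) (Cl N q c)) := by
  have hleft : toMatrix hq (γ (N + 2) q c 0) = Matrix.single 1 0 1 :=
    congrFun (toMatrix_comp_γ hq) 0
  have hright : toMatrix hq (outerRight q c (γ (N + 2) q c)) = Matrix.single 0 1 1 := by
    rw [map_outerRight, toMatrix_comp_γ, outerRight_extendFamily ha]
  refine AlgHom.toLinearMap_injective <| Matrix.ext_linearMap _ fun i j => LinearMap.ext fun r => ?_
  change toMatrix hq (ofMatrix hq ha (Matrix.single i j r)) = Matrix.single i j r
  rw [ofMatrix_single, map_mul, toMatrix_innerHom, map_fermionUnits, hleft, hright,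
    fermionUnits_single]
  ext k l
  simp [Matrix.single_apply, Matrix.diagonal_mul]

/-- The two-fold periodicity `Cl_{N+2}(q,c) ≃ M₂(Cl_N(q,c))`. -/
def matrixEquiv (hq : q ≠ 0) (ha : outerScalar N q c ≠ 0) :
    Cl (N + 2) q c ≃ₐ[ℂ] Matrix (Fin 2) (Fin 2) (Cl N q c) :=
  AlgEquiv.ofAlgHom (toMatrix hq) (ofMatrix hq ha) (toMatrix_ofMatrix hq ha)
    (ofMatrix_toMatrix hq ha)

end Periodicity

section Rho

variable {N n : ℕ} {q c : ℂ} {A : Type*} [Ring A] [Algebra ℂ A]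

/-- The product `Γ_1 ⋯ (s + Γ_m) ⋯ Γ_N` of a family with its `m`-th factor shifted by a scalar;
`rhoOdd` is the case of the generators with their middle factor shifted by `ηc`. -/
def shiftedProd (m : Fin N) (s : ℂ) (Γ : Fin N → A) : A :=
  (((List.finRange N).take m).map Γ).prod * (algebraMap ℂ A s + Γ m) *
    (((List.finRange N).drop (m + 1)).map Γ).prod

lemma map_rhoOdd (f : Cl (2 * n + 1) q c →ₐ[ℂ] A) (η : ℂ) :
    f (rhoOdd n q c η) = shiftedProd ⟨n, by omega⟩ (η * c) (f ∘ γ (2 * n + 1) q c) := by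
  simp [rhoOdd, shiftedProd, prodFirst, prodFrom, map_list_prod, Function.comp_def]

lemma finRange_add_two (N : ℕ) :
    List.finRange (N + 2) =
      0 :: ((List.finRange N).map fun i => i.castSucc.succ) ++ [Fin.last (N + 1)] := by
  rw [List.finRange_succ, List.finRange_succ_last, List.map_append, List.map_map]
  rfl

lemma take_finRange_add_two {m : ℕ} (h : m ≤ N) :
    (List.finRange (N + 2)).take (m + 1) =
      0 :: ((List.finRange N).take m).map fun i => i.castSucc.succ := by
  rw [finRange_add_two, List.cons_append, List.take_succ_cons,
    List.take_append_of_le_length (by simpa using h), List.map_take]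

lemma drop_finRange_add_two {m : ℕ} (h : m ≤ N) :
    (List.finRange (N + 2)).drop (m + 1) =
      (((List.finRange N).drop m).map fun i => i.castSucc.succ) ++ [Fin.last (N + 1)] := by
  rw [finRange_add_two, List.cons_append, List.drop_succ_cons,
    List.drop_append_of_le_length (by simpa using h), List.map_drop]

lemma semiconjBy_prod_map {M ι : Type*} [Monoid M] {a : M} {f g : ι → M}
    (h : ∀ i, SemiconjBy a (f i) (g i)) (l : List ι) :
    SemiconjBy a (l.map f).prod (l.map g).prod := by
  induction l with
  | nil => exact SemiconjBy.one_right a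
  | cons i l ih => simpa using (h i).mul_right ih

lemma prod_map_take_extendFamily {m : ℕ} (hm : m ≤ N) (α β : A) (Γ : Fin N → A) :
    (((List.finRange (N + 2)).take (m + 1)).map (extendFamily q c α β Γ)).prod =
      α * (((List.finRange N).take m).map fun i => twist α β (-(q ^ 2)) * Γ i).prod := by
  simp [take_finRange_add_two hm, Function.comp_def]

lemma prod_map_drop_extendFamily {m : ℕ} (hm : m ≤ N) (α β : A) (Γ : Fin N → A) :
    (((List.finRange (N + 2)).drop (m + 1)).map (extendFamily q c α β Γ)).prod =
      (((List.finRange N).drop m).map fun i => twist α β (-(q ^ 2)) * Γ i).prod *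
        outerScalar N q c • β := by
  simp [drop_finRange_add_two hm, Function.comp_def]

lemma shiftedProd_extendFamily {α β : A} (h : IsFermionPair α β) {Γ : Fin N → A}
    (hα : ∀ i, Commute α (Γ i)) (m : Fin N) (s : ℂ) :
    shiftedProd m.castSucc.succ s (extendFamily q c α β Γ) =
      outerScalar N q c • (shiftedProd m s Γ * (α * β)) := by
  have hΓ (i) : SemiconjBy α (twist α β (-(q ^ 2)) * Γ i) (Γ i) := by
    rw [SemiconjBy, ← mul_assoc, h.left_mul_twist, (hα i).eq]
  have hs : SemiconjBy α (algebraMap ℂ A s) (algebraMap ℂ A s) := (Algebra.commutes s α).symm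
  have hprod : SemiconjBy α (shiftedProd m s fun i => twist α β (-(q ^ 2)) * Γ i)
      (shiftedProd m s Γ) :=
    ((semiconjBy_prod_map hΓ _).mul_right (hs.add_right (hΓ m))).mul_right
      (semiconjBy_prod_map hΓ _)
  calc
    _ = α * shiftedProd m s (fun i => twist α β (-(q ^ 2)) * Γ i) * outerScalar N q c • β := by
      rw [shiftedProd, Fin.val_succ, Fin.val_castSucc, prod_map_take_extendFamily m.2.le,
        prod_map_drop_extendFamily m.2, extendFamily_inner]
      simp only [shiftedProd, mul_assoc]
    _ = _ := by rw [hprod.eq, mul_smul_comm, mul_assoc]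

lemma toMatrix_rhoOdd (hq : q ≠ 0) (n : ℕ) (c η : ℂ) :
    toMatrix hq (rhoOdd (n + 1) q c η) =
      outerScalar (2 * n + 1) q c • Matrix.single 1 1 (rhoOdd n q c η) := by
  have hscalar := map_rhoOdd (c := c) (Matrix.scalarAlgHom (Fin 2) ℂ (α := Cl (2 * n + 1) q c)) η
  calc
    _ = shiftedProd (⟨n, by omega⟩ : Fin (2 * n + 1)).castSucc.succ (η * c)
          (toMatrix hq ∘ γ (2 * n + 1 + 2) q c) := map_rhoOdd (n := n + 1) (toMatrix hq) η
    _ = outerScalar (2 * n + 1) q c • (Matrix.scalarAlgHom (Fin 2) ℂ (rhoOdd n q c η) *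
          (Matrix.single 1 0 1 * Matrix.single 0 1 1)) := by
      rw [toMatrix_comp_γ, hscalar]
      exact shiftedProd_extendFamily (isFermionPair_single _)
        (fun _ => commute_single_scalarAlgHom _ _ _) _ _
    _ = _ := by
      congr 1
      ext k l
      simp [Matrix.single_apply, Matrix.diagonal_mul]

end Rho

section TwoSidedIdeal

universe u v w

variable {K : Type*} {A : Type u} {B : Type v} {n : Type w} [CommSemiring K] [Ring A]
  [Algebra K A] [Ring B] [Algebra K B] [Fintype n]

lemma mapTwoSidedIdeal_span {A B : Type*} [NonUnitalNonAssocRing A] [NonUnitalNonAssocRing B]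
    (e : A ≃+* B) (s : Set A) :
    e.mapTwoSidedIdeal (TwoSidedIdeal.span s) = TwoSidedIdeal.span (e '' s) := by
  apply le_antisymm
  · rw [← OrderIso.le_symm_apply, RingEquiv.mapTwoSidedIdeal_symm, RingEquiv.mapTwoSidedIdeal_apply,
      TwoSidedIdeal.span_le]
    intro x hx
    exact (TwoSidedIdeal.mem_comap _).2 (TwoSidedIdeal.subset_span ⟨x, hx, rfl⟩)
  · rw [TwoSidedIdeal.span_le, Set.image_subset_iff, RingEquiv.mapTwoSidedIdeal_apply]
    intro x hx
    rw [Set.mem_preimage, SetLike.mem_coe, TwoSidedIdeal.mem_comap, e.symm_apply_apply]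
    exact TwoSidedIdeal.subset_span hx

lemma smul_mem_twoSidedIdeal (I : TwoSidedIdeal A) (a : K) {x : A} (hx : x ∈ I) : a • x ∈ I := by
  rw [Algebra.smul_def]
  exact I.mul_mem_left _ _ hx

lemma mem_span_twoSidedIdeal {I : TwoSidedIdeal A} {x : A} :
    x ∈ Submodule.span K (I : Set A) ↔ x ∈ I := by
  refine ⟨fun hx => ?_, fun hx => Submodule.subset_span hx⟩
  induction hx using Submodule.span_induction with
  | mem _ hx => exact hx
  | zero => exact I.zero_mem
  | add x y _ _ hx hy => exact I.add_mem hx hy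
  | smul a x _ hx => exact smul_mem_twoSidedIdeal I a hx

lemma twoSidedIdeal_span_smul {a : K} (ha : IsUnit a) (x : A) :
    TwoSidedIdeal.span {a • x} = TwoSidedIdeal.span {x} := by
  obtain ⟨a, rfl⟩ := ha
  apply le_antisymm <;> rw [TwoSidedIdeal.span_le, Set.singleton_subset_iff, SetLike.mem_coe]
  · exact smul_mem_twoSidedIdeal _ _ (TwoSidedIdeal.subset_span rfl)
  · have hx : (↑a⁻¹ : K) • (a : K) • x ∈ TwoSidedIdeal.span {(a : K) • x} :=
      smul_mem_twoSidedIdeal _ _ (TwoSidedIdeal.subset_span rfl)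
    rwa [smul_smul, a.inv_mul, one_smul] at hx

lemma twoSidedIdeal_span_single [DecidableEq n] (i j : n) (x : A) :
    TwoSidedIdeal.span {Matrix.single i j x} = (TwoSidedIdeal.span {x}).matrix n := by
  have : Nonempty n := ⟨i⟩
  apply le_antisymm
  · rw [TwoSidedIdeal.span_le, Set.singleton_subset_iff]
    intro k l
    rw [Matrix.single_apply]
    split_ifs
    exacts [TwoSidedIdeal.subset_span rfl, (TwoSidedIdeal.span {x}).zero_mem]
  · change TwoSidedIdeal.orderIsoMatrix (TwoSidedIdeal.span {x}) ≤ _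
    rw [← OrderIso.le_symm_apply, TwoSidedIdeal.span_le, Set.singleton_subset_iff]
    change x ∈ (TwoSidedIdeal.equivMatrix.symm
      (TwoSidedIdeal.span {Matrix.single i j x}) : Set A)
    rw [TwoSidedIdeal.coe_equivMatrix_symm_apply _ i j]
    exact ⟨_, TwoSidedIdeal.subset_span rfl, Matrix.single_apply_same i j x⟩

lemma span_mapTwoSidedIdeal (e : A ≃ₐ[K] B) (I : TwoSidedIdeal A) :
    Submodule.span K (e.toRingEquiv.mapTwoSidedIdeal I : Set B) =
      (Submodule.span K (I : Set A)).map e.toLinearMap := by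
  ext x
  rw [mem_span_twoSidedIdeal, RingEquiv.mapTwoSidedIdeal_apply, TwoSidedIdeal.mem_comap]
  refine ⟨fun hx => ⟨_, Submodule.subset_span hx, e.apply_symm_apply x⟩, ?_⟩
  rintro ⟨y, hy, rfl⟩
  exact (e.symm_apply_apply y).symm ▸ mem_span_twoSidedIdeal.1 hy

lemma span_twoSidedIdeal_matrix (I : TwoSidedIdeal A) :
    Submodule.span K (I.matrix n : Set (Matrix n n A)) =
      LinearMap.range (Submodule.span K (I : Set A)).subtype.mapMatrix := by
  classical
  ext M
  rw [mem_span_twoSidedIdeal, TwoSidedIdeal.mem_matrix]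
  constructor
  · intro hM
    exact ⟨fun i j => ⟨M i j, Submodule.subset_span (hM i j)⟩, rfl⟩
  · rintro ⟨M, rfl⟩ i j
    exact mem_span_twoSidedIdeal.1 (M i j).2

lemma span_twoSidedIdeal_span_singleton {x : A} (hl : ∀ a, a * x ∈ Submodule.span K {x})
    (hr : ∀ a, x * a ∈ Submodule.span K {x}) :
    Submodule.span K (TwoSidedIdeal.span {x} : Set A) = Submodule.span K {x} := by
  refine le_antisymm (Submodule.span_le.2 fun y hy => ?_)
    (Submodule.span_mono TwoSidedIdeal.subset_span)
  induction hy using TwoSidedIdeal.span_induction with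
  | mem y hy => exact Submodule.subset_span hy
  | zero => exact zero_mem _
  | add y z _ _ hy hz => exact add_mem hy hz
  | neg y _ hy =>
    obtain ⟨b, rfl⟩ := Submodule.mem_span_singleton.1 hy
    rw [← neg_one_mul, mul_smul_comm]
    exact Submodule.smul_mem _ b (hl (-1))
  | left_absorb a y _ hy =>
    obtain ⟨b, rfl⟩ := Submodule.mem_span_singleton.1 hy
    rw [mul_smul_comm]
    exact Submodule.smul_mem _ b (hl a)
  | right_absorb a y _ hy =>
    obtain ⟨b, rfl⟩ := Submodule.mem_span_singleton.1 hy
    rw [smul_mul_assoc]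
    exact Submodule.smul_mem _ b (hr a)

variable {F : Type*} [Field F] [Algebra F A]

lemma rank_span_twoSidedIdeal_matrix (I : TwoSidedIdeal A) :
    Module.rank F (Submodule.span F (I.matrix n : Set (Matrix n n A))) =
      (Fintype.card n) ^ 2 * Cardinal.lift.{w} (Module.rank F (Submodule.span F (I : Set A))) := by
  rw [span_twoSidedIdeal_matrix, rank_range_of_injective _ (Matrix.map_injective
    Subtype.val_injective), rank_matrix_module']
  simp [sq]

lemma rank_span_singleton {V : Type*} [AddCommGroup V] [Module F V] {x : V} (hx : x ≠ 0) :
    Module.rank F (Submodule.span F {x}) = 1 := by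
  rw [rank_span_set (LinearIndepOn.singleton (v := id) hx), Cardinal.mk_singleton]

lemma isAtom_of_rank_span_eq_one {I : TwoSidedIdeal A}
    (h : Module.rank F (Submodule.span F (I : Set A)) = 1) : IsAtom I := by
  have hspan {J J' : TwoSidedIdeal A}
      (hle : Submodule.span F (J : Set A) ≤ Submodule.span F (J' : Set A)) : J ≤ J' :=
    fun x hx => mem_span_twoSidedIdeal.1 (hle (Submodule.subset_span hx))
  have hbot : Submodule.span F ((⊥ : TwoSidedIdeal A) : Set A) = ⊥ := by simp
  have hatom : IsAtom (Submodule.span F (I : Set A)) :=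
    Submodule.isAtom_iff_finrank_eq_one.2 (Module.finrank_eq_of_rank_eq h)
  refine isAtom_iff_le_of_ge.2 ⟨?_, fun J hJ hJI => hspan ?_⟩
  · rintro rfl
    exact hatom.1 hbot
  · exact (isAtom_iff_le_of_ge.1 hatom).2 _
      (fun hJ' => hJ (le_bot_iff.1 (hspan (hJ'.le.trans bot_le)))) (Submodule.span_mono hJI)

end TwoSidedIdeal

section Ideals

variable {N : ℕ} {q c : ℂ}

/-- The two-sided ideals of `Cl_{N+2}(q,c)` are those of `Cl_N(q,c)`, through
`Cl_{N+2}(q,c) ≃ M₂(Cl_N(q,c))`. -/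
def idealOrderIso (hq : q ≠ 0) (ha : outerScalar N q c ≠ 0) :
    TwoSidedIdeal (Cl N q c) ≃o TwoSidedIdeal (Cl (N + 2) q c) :=
  TwoSidedIdeal.orderIsoMatrix.trans (matrixEquiv hq ha).symm.toRingEquiv.mapTwoSidedIdeal

lemma idealOrderIso_apply (hq : q ≠ 0) (ha : outerScalar N q c ≠ 0) (I : TwoSidedIdeal (Cl N q c)) :
    idealOrderIso hq ha I =
      (matrixEquiv hq ha).symm.toRingEquiv.mapTwoSidedIdeal (I.matrix (Fin 2)) :=
  rfl

lemma rank_span_idealOrderIso (hq : q ≠ 0) (ha : outerScalar N q c ≠ 0)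
    (I : TwoSidedIdeal (Cl N q c)) :
    Module.rank ℂ (Submodule.span ℂ (idealOrderIso hq ha I : Set (Cl (N + 2) q c))) =
      2 ^ 2 * Module.rank ℂ (Submodule.span ℂ (I : Set (Cl N q c))) := by
  rw [idealOrderIso_apply, span_mapTwoSidedIdeal]
  refine (LinearEquiv.rank_map_eq (matrixEquiv hq ha).symm.toLinearEquiv _).trans ?_
  rw [rank_span_twoSidedIdeal_matrix, Fintype.card_fin, Nat.cast_ofNat, Cardinal.lift_uzero]

lemma idealOrderIso_span_rhoOdd {n : ℕ} (hq : q ≠ 0) (ha : outerScalar (2 * n + 1) q c ≠ 0)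
    (η : ℂ) :
    idealOrderIso hq ha (TwoSidedIdeal.span {rhoOdd n q c η}) =
      TwoSidedIdeal.span {rhoOdd (n + 1) q c η} := by
  have hrho : (matrixEquiv hq ha).symm (Matrix.single 1 1 (rhoOdd n q c η)) =
      (outerScalar (2 * n + 1) q c)⁻¹ • rhoOdd (n + 1) q c η := by
    rw [eq_inv_smul_iff₀ ha, ← map_smul, ← toMatrix_rhoOdd hq]
    exact (matrixEquiv hq ha).symm_apply_apply _
  rw [idealOrderIso_apply, ← twoSidedIdeal_span_single 1 1, mapTwoSidedIdeal_span,
    Set.image_singleton]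
  exact (congrArg (fun x => TwoSidedIdeal.span {x}) hrho).trans
    (twoSidedIdeal_span_smul (inv_ne_zero ha).isUnit _)

end Ideals

section OneGenerator

variable {q c η : ℂ}

lemma rhoOdd_zero (q c η : ℂ) :
    rhoOdd 0 q c η = algebraMap ℂ (Cl 1 q c) (η * c) + γ 1 q c 0 := by
  simp only [rhoOdd, prodFirst, prodFrom, List.take_zero, List.map_nil, List.prod_nil, one_mul]
  exact mul_one _

lemma pairing_one {A : Type*} [Ring A] [Algebra ℂ A] (q c : ℂ) (Γ : Fin 1 → A) (i : Fin 1) :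
    pairing q c Γ i = algebraMap ℂ A (c ^ 2) := by
  rw [Subsingleton.elim i 0, pairing, show Finset.Iio (0 : Fin 1) = ∅ from Finset.Iio_bot]
  simp

lemma isCliffordFamily_one (q : ℂ) {z : ℂ} (hz : z ^ 2 = c ^ 2) :
    IsCliffordFamily q c fun _ : Fin 1 => z where
  sq i h := by omega
  swap i j hij := by omega
  pair i h := by omega
  middle i _ := by rw [pairing_one, ← sq, hz, Algebra.algebraMap_self_apply]

/-- The character `γ_1 ↦ ηc` of `Cl_1(q,c)`, for a sign `η`. -/
def character (q c : ℂ) (hη : η ^ 2 = 1) : Cl 1 q c →ₐ[ℂ] ℂ :=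
  Cl.lift (isCliffordFamily_one q (z := η * c) (by rw [mul_pow, hη, one_mul]))

lemma character_rhoOdd_zero (hη : η ^ 2 = 1) (θ : ℂ) :
    character q c hη (rhoOdd 0 q c θ) = (θ + η) * c := by
  rw [rhoOdd_zero, map_add, AlgHom.commutes, character, Cl.lift_γ, add_mul]
  rfl

lemma γ_one_mul_self (q c : ℂ) (i : Fin 1) : γ 1 q c i * γ 1 q c i = algebraMap ℂ _ (c ^ 2) := by
  rw [(isCliffordFamily_γ 1 q c).middle i (by omega), pairing_one]

lemma mul_rhoOdd_zero (hη : η ^ 2 = 1) (x : Cl 1 q c) :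
    x * rhoOdd 0 q c η = character q c hη x • rhoOdd 0 q c η := by
  have hx : x ∈ Algebra.adjoin ℂ (Set.range (γ 1 q c)) := Cl.adjoin_range_γ 1 q c ▸ trivial
  induction hx using Algebra.adjoin_induction with
  | mem x hx =>
    obtain ⟨i, rfl⟩ := hx
    have hc2 : c ^ 2 = (η * c) * (η * c) := by linear_combination -c ^ 2 * hη
    rw [character, Cl.lift_γ, rhoOdd_zero, Subsingleton.elim i 0, mul_add, γ_one_mul_self, hc2,
      smul_add, ← Algebra.commutes, add_comm, map_mul, ← Algebra.smul_def, ← Algebra.smul_def]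
  | algebraMap a => rw [AlgHom.commutes, Algebra.smul_def]; rfl
  | add x y _ _ hx hy => rw [add_mul, hx, hy, map_add, add_smul]
  | mul x y _ _ hx hy => rw [mul_assoc, hy, mul_smul_comm, hx, smul_smul, map_mul, mul_comm]

lemma commute_rhoOdd_zero (x : Cl 1 q c) : Commute (rhoOdd 0 q c η) x := by
  refine Cl.commute_map (f := AlgHom.id ℂ _) (fun i => ?_) x
  rw [rhoOdd_zero, Subsingleton.elim i 0]
  exact (Algebra.commute_algebraMap_left _ _).add_left (Commute.refl _)

lemma span_span_rhoOdd_zero (hη : η ^ 2 = 1) :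
    Submodule.span ℂ (TwoSidedIdeal.span {rhoOdd 0 q c η} : Set (Cl 1 q c)) =
      Submodule.span ℂ {rhoOdd 0 q c η} := by
  have hmem (x : Cl 1 q c) : x * rhoOdd 0 q c η ∈ Submodule.span ℂ {rhoOdd 0 q c η} :=
    Submodule.mem_span_singleton.2 ⟨_, (mul_rhoOdd_zero hη x).symm⟩
  exact span_twoSidedIdeal_span_singleton hmem fun x => (commute_rhoOdd_zero x).eq ▸ hmem x

lemma mem_span_rhoOdd_zero (hη : η ^ 2 = 1) {x : Cl 1 q c} :
    x ∈ TwoSidedIdeal.span {rhoOdd 0 q c η} ↔ ∃ a : ℂ, a • rhoOdd 0 q c η = x := by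
  rw [← mem_span_twoSidedIdeal (K := ℂ), span_span_rhoOdd_zero hη, Submodule.mem_span_singleton]

lemma rhoOdd_zero_ne_zero (hc : c ≠ 0) (hη : η ^ 2 = 1) : rhoOdd 0 q c η ≠ 0 := by
  have hη0 : η ≠ 0 := by rintro rfl; norm_num at hη
  intro h
  have hχ := character_rhoOdd_zero (q := q) (c := c) hη η
  rw [h, map_zero, ← two_mul] at hχ
  exact mul_ne_zero (mul_ne_zero two_ne_zero hη0) hc hχ.symm

lemma rank_span_rhoOdd_zero (hc : c ≠ 0) (hη : η ^ 2 = 1) :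
    Module.rank ℂ (Submodule.span ℂ
      (TwoSidedIdeal.span {rhoOdd 0 q c η} : Set (Cl 1 q c))) = 1 := by
  rw [span_span_rhoOdd_zero hη]
  exact rank_span_singleton (rhoOdd_zero_ne_zero hc hη)

lemma rhoOdd_zero_sub (q c : ℂ) :
    rhoOdd 0 q c 1 - rhoOdd 0 q c (-1) = algebraMap ℂ (Cl 1 q c) (2 * c) := by
  rw [rhoOdd_zero, rhoOdd_zero, add_sub_add_right_eq_sub, ← map_sub]
  ring_nf

lemma isCompl_span_rhoOdd_zero (q : ℂ) (hc : c ≠ 0) :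
    IsCompl (TwoSidedIdeal.span {rhoOdd 0 q c 1}) (TwoSidedIdeal.span {rhoOdd 0 q c (-1)}) := by
  have h2c : 2 * c ≠ 0 := mul_ne_zero two_ne_zero hc
  constructor
  · rw [disjoint_iff_inf_le]
    intro x hx
    obtain ⟨hpos, hneg⟩ := (TwoSidedIdeal.mem_inf _).1 hx
    obtain ⟨a, rfl⟩ := (mem_span_rhoOdd_zero (one_pow 2)).1 hpos
    obtain ⟨b, hb⟩ := (mem_span_rhoOdd_zero neg_one_sq).1 hneg
    have hχ : a * (2 * c) = 0 := by
      simpa [character_rhoOdd_zero, one_add_one_eq_two] using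
        congr(character q c (one_pow 2) $hb).symm
    rw [(mul_eq_zero.1 hχ).resolve_right h2c, zero_smul]
    exact zero_mem _
  · have hmem : algebraMap ℂ (Cl 1 q c) (2 * c) ∈
        TwoSidedIdeal.span {rhoOdd 0 q c 1} ⊔ TwoSidedIdeal.span {rhoOdd 0 q c (-1)} := by
      rw [← rhoOdd_zero_sub]
      exact sub_mem (TwoSidedIdeal.mem_sup_left (TwoSidedIdeal.subset_span rfl))
        (TwoSidedIdeal.mem_sup_right (TwoSidedIdeal.subset_span rfl))
    have hone := smul_mem_twoSidedIdeal _ (2 * c)⁻¹ hmem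
    rw [Algebra.algebraMap_eq_smul_one, inv_smul_smul₀ h2c] at hone
    exact codisjoint_iff.2 (TwoSidedIdeal.eq_top _ hone)

lemma characters_bijective (q : ℂ) (hc : c ≠ 0) :
    Function.Bijective ((character q c (one_pow 2)).prod (character q c neg_one_sq)) := by
  have h2c : 2 * c ≠ 0 := mul_ne_zero two_ne_zero hc
  constructor
  · rw [injective_iff_map_eq_zero]
    intro x hx
    have hpos : character q c (one_pow 2) x = 0 := congrArg Prod.fst hx
    have hneg : character q c neg_one_sq x = 0 := congrArg Prod.snd hx
    have hx : (2 * c) • x = 0 := calc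
      (2 * c) • x = x * (rhoOdd 0 q c 1 - rhoOdd 0 q c (-1)) := by
        rw [rhoOdd_zero_sub, ← Algebra.commutes, Algebra.smul_def]
      _ = 0 := by
        rw [mul_sub, mul_rhoOdd_zero (one_pow 2), mul_rhoOdd_zero neg_one_sq, hpos, hneg, zero_smul,
          zero_smul, sub_zero]
    exact (smul_eq_zero.1 hx).resolve_left h2c
  · rintro ⟨a, b⟩
    refine ⟨(2 * c)⁻¹ • (a • rhoOdd 0 q c 1 - b • rhoOdd 0 q c (-1)), Prod.ext ?_ ?_⟩
    · change character q c (one_pow 2) _ = a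
      simp only [map_smul, map_sub, character_rhoOdd_zero, smul_eq_mul]
      field_simp
      ring
    · change character q c neg_one_sq _ = b
      simp only [map_smul, map_sub, character_rhoOdd_zero, smul_eq_mul]
      field_simp
      ring

lemma isSemisimpleRing_one (q : ℂ) (hc : c ≠ 0) : IsSemisimpleRing (Cl 1 q c) :=
  (AlgEquiv.ofBijective _ (characters_bijective q hc)).symm.toRingEquiv.isSemisimpleRing

end OneGenerator

section Odd

variable {q c η : ℂ}

lemma isSemisimpleRing_odd (n : ℕ) (hq : q ≠ 0) (hq2 : q ^ 2 ≠ -1) (hc : c ≠ 0) :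
    IsSemisimpleRing (Cl (2 * n + 1) q c) := by
  induction n with
  | zero => exact isSemisimpleRing_one q hc
  | succ n ih =>
    have ha := outerScalar_ne_zero hq hq2 hc (2 * n + 1)
    exact (matrixEquiv hq ha).symm.toRingEquiv.isSemisimpleRing

lemma isCompl_span_rhoOdd (n : ℕ) (hq : q ≠ 0) (hq2 : q ^ 2 ≠ -1) (hc : c ≠ 0) :
    IsCompl (TwoSidedIdeal.span {rhoOdd n q c 1}) (TwoSidedIdeal.span {rhoOdd n q c (-1)}) := by
  induction n with
  | zero => exact isCompl_span_rhoOdd_zero q hc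
  | succ n ih =>
    have ha := outerScalar_ne_zero hq hq2 hc (2 * n + 1)
    rw [← idealOrderIso_span_rhoOdd hq ha, ← idealOrderIso_span_rhoOdd hq ha]
    exact (idealOrderIso hq ha).isCompl ih

lemma isAtom_span_rhoOdd (n : ℕ) (hq : q ≠ 0) (hq2 : q ^ 2 ≠ -1) (hc : c ≠ 0) (hη : η ^ 2 = 1) :
    IsAtom (TwoSidedIdeal.span {rhoOdd n q c η}) := by
  induction n with
  | zero => exact isAtom_of_rank_span_eq_one (rank_span_rhoOdd_zero hc hη)
  | succ n ih =>
    have ha := outerScalar_ne_zero hq hq2 hc (2 * n + 1)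
    rw [← idealOrderIso_span_rhoOdd hq ha]
    exact ((idealOrderIso hq ha).isAtom_iff _).2 ih

lemma rank_span_rhoOdd (n : ℕ) (hq : q ≠ 0) (hq2 : q ^ 2 ≠ -1) (hc : c ≠ 0) (hη : η ^ 2 = 1) :
    Module.rank ℂ (Submodule.span ℂ
      (TwoSidedIdeal.span {rhoOdd n q c η} : Set (Cl (2 * n + 1) q c))) = 2 ^ (2 * n) := by
  induction n with
  | zero => exact (rank_span_rhoOdd_zero hc hη).trans (pow_zero 2).symm
  | succ n ih =>
    have ha := outerScalar_ne_zero hq hq2 hc (2 * n + 1)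
    rw [← idealOrderIso_span_rhoOdd hq ha]
    exact (rank_span_idealOrderIso hq ha _).trans (by rw [ih, ← pow_add, mul_add_one, add_comm])

end Odd

theorem odd_clifford_semisimple_general (n : ℕ) (q c : ℂ) (hq : q ≠ 0) (hq2 : q ^ 2 ≠ -1)
    (hc : c ≠ 0) :
    IsSemisimpleRing (Cl (2 * n + 1) q c) ∧
    TwoSidedIdeal.span {rhoOdd n q c 1} ⊔ TwoSidedIdeal.span {rhoOdd n q c (-1)} = ⊤ ∧
    TwoSidedIdeal.span {rhoOdd n q c 1} ⊓ TwoSidedIdeal.span {rhoOdd n q c (-1)} = ⊥ ∧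
    (∀ J : TwoSidedIdeal (Cl (2 * n + 1) q c), J ≤ TwoSidedIdeal.span {rhoOdd n q c 1} →
      J = ⊥ ∨ J = TwoSidedIdeal.span {rhoOdd n q c 1}) ∧
    (∀ J : TwoSidedIdeal (Cl (2 * n + 1) q c), J ≤ TwoSidedIdeal.span {rhoOdd n q c (-1)} →
      J = ⊥ ∨ J = TwoSidedIdeal.span {rhoOdd n q c (-1)}) ∧
    Module.rank ℂ
      (Submodule.span ℂ ((TwoSidedIdeal.span {rhoOdd n q c 1} : TwoSidedIdeal _) :
        Set (Cl (2 * n + 1) q c))) = 2 ^ (2 * n) ∧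
    Module.rank ℂ
      (Submodule.span ℂ ((TwoSidedIdeal.span {rhoOdd n q c (-1)} : TwoSidedIdeal _) :
        Set (Cl (2 * n + 1) q c))) = 2 ^ (2 * n) :=
  have hcompl := isCompl_span_rhoOdd n hq hq2 hc
  have hpos := isAtom_span_rhoOdd n hq hq2 hc (one_pow 2)
  have hneg := isAtom_span_rhoOdd n hq hq2 hc neg_one_sq
  ⟨isSemisimpleRing_odd n hq hq2 hc, hcompl.sup_eq_top, hcompl.inf_eq_bot,
    fun _ => hpos.le_iff.1, fun _ => hneg.le_iff.1,
    rank_span_rhoOdd n hq hq2 hc (one_pow 2), rank_span_rhoOdd n hq hq2 hc neg_one_sq⟩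

/-- `Cl_{2n+1}(q,c)` is semisimple, and is the direct sum of the two
simple two-sided ideals `I_±` generated by `ρ_±`, each of dimension `2^{2n}`. -/
theorem odd_clifford_semisimple (n : ℕ) (hn : 1 ≤ n) (q c : ℂ)
    (hq : q ≠ 0) (hqr : ∀ m : ℕ, 0 < m → q ^ m ≠ 1)
    (hcR : (c ^ 2).im = 0) (hc : c ≠ 0) :
    IsSemisimpleRing (Cl (2 * n + 1) q c) ∧
    TwoSidedIdeal.span {rhoOdd n q c 1} ⊔ TwoSidedIdeal.span {rhoOdd n q c (-1)} = ⊤ ∧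
    TwoSidedIdeal.span {rhoOdd n q c 1} ⊓ TwoSidedIdeal.span {rhoOdd n q c (-1)} = ⊥ ∧
    (∀ J : TwoSidedIdeal (Cl (2 * n + 1) q c), J ≤ TwoSidedIdeal.span {rhoOdd n q c 1} →
      J = ⊥ ∨ J = TwoSidedIdeal.span {rhoOdd n q c 1}) ∧
    (∀ J : TwoSidedIdeal (Cl (2 * n + 1) q c), J ≤ TwoSidedIdeal.span {rhoOdd n q c (-1)} →
      J = ⊥ ∨ J = TwoSidedIdeal.span {rhoOdd n q c (-1)}) ∧
    Module.rank ℂ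
      (Submodule.span ℂ ((TwoSidedIdeal.span {rhoOdd n q c 1} : TwoSidedIdeal _) :
        Set (Cl (2 * n + 1) q c))) = 2 ^ (2 * n) ∧
    Module.rank ℂ
      (Submodule.span ℂ ((TwoSidedIdeal.span {rhoOdd n q c (-1)} : TwoSidedIdeal _) :
        Set (Cl (2 * n + 1) q c))) = 2 ^ (2 * n) :=
  odd_clifford_semisimple_general n q c hq
    (fun hq2 => hqr 4 four_pos (by linear_combination (q ^ 2 - 1) * hq2)) hc

end FRT
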